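/- Absence of zeros in the open right half-plane for second-order structured systems: Let A = [[0, Gᵀ],[−G, −D₀]] ∈ ℝ^{2n×2n}, B = [[0],[B₀]] ∈ ℝ^{2n×m}, C = Bᵀ, where G ∈ ℝ^{n×n} is invertible, D₀ ∈ ℝ^{n×n} is symmetric positive semidefinite, and B₀ ∈ ℝ^{n×m} has trivial kernel. Then for every μ ∈ ℂ with Re μ > 0, the (2n+m)×(2n+m) complex block matrix [[−μI_{2n}+A, B],[C, 0]] is invertible; in particular μ is not an invariant zero of the system [A,B,C]. -/

import Mathlib

/-!
Let `(x, u)` be a kernel vector of the pencil, so `-μ x + A x + B u = 0` and `Bᵀ x = 0`.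
Pairing the first equation with `x` kills the term `B u`, and the real part of what is left reads
`Re μ ‖x‖² = Re ⟨x, A x⟩`. The skew-symmetric blocks of `A` do not contribute to the right-hand
side, so it equals `-Re ⟨x₂, D₀ x₂⟩ ≤ 0`; hence `x = 0`. Then `B u = 0`, so `u = 0`.

As `A` and `B` are real, the argument is carried out on `a = Re x` and `b = Im x`, using
`Re ⟨x, A x⟩ = a ⬝ᵥ A a + b ⬝ᵥ A b`. The lemma `isUnit_pencil_of_dissipative` does this for every
dissipative `A` and injective `B`; `soA_dissipative` and `soB_injective` supply its hypotheses.
-/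

open Matrix

/-- The system matrix `A = [[0, Gᵀ],[−G, −D₀]]` of a second-order structured system. -/
def soA {n : ℕ} (G D₀ : Matrix (Fin n) (Fin n) ℝ) :
    Matrix (Fin n ⊕ Fin n) (Fin n ⊕ Fin n) ℝ :=
  fromBlocks 0 Gᵀ (-G) (-D₀)

/-- The input matrix `B = [[0],[B₀]]` of a second-order structured system. -/
def soB {n m : ℕ} (B₀ : Matrix (Fin n) (Fin m) ℝ) :
    Matrix (Fin n ⊕ Fin n) (Fin m) ℝ :=
  fromRows 0 B₀

lemma re_map_ofReal_mulVec {ι κ : Type*} [Fintype κ] (M : Matrix ι κ ℝ) (v : κ → ℂ) :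
    (fun i => ((M.map Complex.ofReal *ᵥ v) i).re) = M *ᵥ (fun j => (v j).re) := by
  ext i
  simp [mulVec, dotProduct]

lemma im_map_ofReal_mulVec {ι κ : Type*} [Fintype κ] (M : Matrix ι κ ℝ) (v : κ → ℂ) :
    (fun i => ((M.map Complex.ofReal *ᵥ v) i).im) = M *ᵥ (fun j => (v j).im) := by
  ext i
  simp [mulVec, dotProduct]

/-- A port `B` with collocated output `Bᵀ` on a dissipative system `A` gives a zero pencil that is
invertible throughout the open right half-plane. -/
lemma isUnit_pencil_of_dissipative {ι κ : Type*} [Fintype ι] [DecidableEq ι] [Fintype κ]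
    [DecidableEq κ] (A : Matrix ι ι ℝ) (B : Matrix ι κ ℝ)
    (hA : ∀ v : ι → ℝ, v ⬝ᵥ (A *ᵥ v) ≤ 0) (hB : ∀ v : κ → ℝ, B *ᵥ v = 0 → v = 0)
    (μ : ℂ) (hμ : 0 < μ.re) :
    IsUnit (fromBlocks (-(μ • (1 : Matrix ι ι ℂ)) + A.map Complex.ofReal)
      (B.map Complex.ofReal) (Bᵀ.map Complex.ofReal) (0 : Matrix κ κ ℂ)) := by
  rw [← mulVec_injective_iff_isUnit, ← coe_mulVecLin, injective_iff_map_eq_zero]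
  intro w hw
  obtain ⟨x, u, rfl⟩ : ∃ x u, w = Sum.elim x u := ⟨_, _, (Sum.elim_comp_inl_inr w).symm⟩
  rw [mulVecLin_apply, fromBlocks_mulVec, Sum.elim_comp_inl, Sum.elim_comp_inr] at hw
  have h1 : ∀ i, -(μ * x i) + (A.map Complex.ofReal *ᵥ x) i
      + (B.map Complex.ofReal *ᵥ u) i = 0 := fun i => by
    simpa [add_mulVec, neg_mulVec, smul_mulVec] using congrFun hw (Sum.inl i)
  have h2 : ∀ j, (Bᵀ.map Complex.ofReal *ᵥ x) j = 0 := fun j => by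
    simpa using congrFun hw (Sum.inr j)
  set a : ι → ℝ := fun i => (x i).re with ha
  set b : ι → ℝ := fun i => (x i).im with hb
  set p : κ → ℝ := fun j => (u j).re with hp
  set q : κ → ℝ := fun j => (u j).im with hq
  have hre : -(μ.re • a - μ.im • b) + A *ᵥ a + B *ᵥ p = 0 := by
    rw [ha, hp, ← re_map_ofReal_mulVec, ← re_map_ofReal_mulVec]
    ext i
    simpa [hb] using congrArg Complex.re (h1 i)
  have him : -(μ.re • b + μ.im • a) + A *ᵥ b + B *ᵥ q = 0 := by
    rw [hb, hq, ← im_map_ofReal_mulVec, ← im_map_ofReal_mulVec]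
    ext i
    simpa [ha] using congrArg Complex.im (h1 i)
  have hBa : a ᵥ* B = 0 := by
    rw [← mulVec_transpose, ha, ← re_map_ofReal_mulVec]
    ext j
    simp [h2 j]
  have hBb : b ᵥ* B = 0 := by
    rw [← mulVec_transpose, hb, ← im_map_ofReal_mulVec]
    ext j
    simp [h2 j]
  have ea := congrArg (a ⬝ᵥ ·) hre
  have eb := congrArg (b ⬝ᵥ ·) him
  simp only [dotProduct_add, dotProduct_neg, dotProduct_sub, dotProduct_smul, dotProduct_zero,
    dotProduct_mulVec _ B, hBa, hBb, zero_dotProduct, smul_eq_mul] at ea eb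
  have hab : a ⬝ᵥ a + b ⬝ᵥ b ≤ 0 := by
    have hcomm := dotProduct_comm a b
    rw [hcomm] at ea
    have := hA a
    have := hA b
    by_contra! hpos
    have := mul_pos hμ hpos
    linarith
  have na : 0 ≤ a ⬝ᵥ a := Finset.sum_nonneg fun i _ => mul_self_nonneg (a i)
  have nb : 0 ≤ b ⬝ᵥ b := Finset.sum_nonneg fun i _ => mul_self_nonneg (b i)
  have ha0 : a = 0 := dotProduct_self_eq_zero.1 (by linarith)
  have hb0 : b = 0 := dotProduct_self_eq_zero.1 (by linarith)
  have hp0 : p = 0 := hB p (by simpa [ha0, hb0] using hre)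
  have hq0 : q = 0 := hB q (by simpa [ha0, hb0] using him)
  ext k
  rcases k with i | j
  · exact Complex.ext (congrFun ha0 i) (congrFun hb0 i)
  · exact Complex.ext (congrFun hp0 j) (congrFun hq0 j)

lemma soA_dissipative {n : ℕ} (G D₀ : Matrix (Fin n) (Fin n) ℝ) (hD₀ : D₀.PosSemidef)
    (v : Fin n ⊕ Fin n → ℝ) : v ⬝ᵥ (soA G D₀ *ᵥ v) ≤ 0 := by
  obtain ⟨x, y, rfl⟩ : ∃ x y, v = Sum.elim x y := ⟨_, _, (Sum.elim_comp_inl_inr v).symm⟩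
  have hD := hD₀.dotProduct_mulVec_nonneg y
  rw [star_trivial] at hD
  have hskew : x ⬝ᵥ (Gᵀ *ᵥ y) = y ⬝ᵥ (G *ᵥ x) := by
    rw [dotProduct_mulVec, vecMul_transpose, dotProduct_comm]
  rw [soA, fromBlocks_mulVec, Sum.elim_comp_inl, Sum.elim_comp_inr, sumElim_dotProduct_sumElim]
  simp only [zero_mulVec, zero_add, neg_mulVec, dotProduct_add, dotProduct_neg]
  linarith

lemma soB_injective {n m : ℕ} (B₀ : Matrix (Fin n) (Fin m) ℝ)
    (hB₀ : ∀ v : Fin m → ℝ, B₀.mulVec v = 0 → v = 0) (v : Fin m → ℝ)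
    (hv : soB B₀ *ᵥ v = 0) : v = 0 := by
  rw [soB, fromRows_mulVec] at hv
  exact hB₀ v (funext fun i => congrFun hv (Sum.inr i))

/-- **Absence of invariant zeros in the open right half-plane for second-order structured
systems.** For every `μ ∈ ℂ` with `Re μ > 0` the zero pencil `[[−μI + A, B],[C, 0]]`
is invertible. -/
theorem so_no_zeros_in_open_right_half_plane {n m : ℕ}
    (G D₀ : Matrix (Fin n) (Fin n) ℝ) (B₀ : Matrix (Fin n) (Fin m) ℝ)
    (hG : IsUnit G) (hD₀sym : D₀ᵀ = D₀) (hD₀ : D₀.PosSemidef)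
    (hB₀ : ∀ v : Fin m → ℝ, B₀.mulVec v = 0 → v = 0) :
    ∀ μ : ℂ, 0 < μ.re →
      IsUnit (fromBlocks
        (-(μ • (1 : Matrix (Fin n ⊕ Fin n) (Fin n ⊕ Fin n) ℂ)) +
          (soA G D₀).map Complex.ofReal)
        ((soB B₀).map Complex.ofReal)
        (((soB B₀)ᵀ).map Complex.ofReal)
        (0 : Matrix (Fin m) (Fin m) ℂ)) :=
  isUnit_pencil_of_dissipative (soA G D₀) (soB B₀) (soA_dissipative G D₀ hD₀)
    (soB_injective B₀ hB₀)
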